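/- As s tends to +∞, the function g(s) = −log B(s) / log √(t(s)) tends to 4. -/

import Mathlib

/-!
Write `t = s + 2 + e / s`. The key estimate is `e → 0` as `s → ∞` (`tendsto_err`): since
`t + 1 / t = T`, one has `e = 1 - s / t + (√(s² + 4) - s) / 2`, where `s / t → 1` because
`s ≤ t ≤ s + 4`, and `√(s² + 4) - s` is at most `4 / s`.

In terms of `u = 1 / s` and `e`, the quantity `s² B(s)` is a rational function that is regular at
`(u, e) = (0, 0)` with value `1` there; so `s² B(s) → 1` (`tendsto_sq_mul_B`). Since also
`t / s → 1`, this gives `-log B = 2 log s + o(1)` and `log √t = (log s) / 2 + o(1)`, and the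
quotient tends to `4`.
-/

open Real Filter Topology

noncomputable def T (s : ℝ) : ℝ := (2 + 3*s + 2*s^2 + Real.sqrt (s^2 + 4)) / (2*s)

noncomputable def t (s : ℝ) : ℝ := (T s + Real.sqrt ((T s)^2 - 4)) / 2

noncomputable def B (s : ℝ) : ℝ :=
  (s * (1 - (2 + s) * t s + (t s)^2) * (s - (2 + 2*s + s^2) * t s + (1 + s) * (t s)^2)^2
    + (1 + s - t s)^2 * (t s)^3 * (s - (1 + s)^2 * t s + s * (t s)^2)^2)
  / ((t s - 1)^2 * (t s)^5)

noncomputable def g (s : ℝ) : ℝ := - Real.log (B s) / Real.log (Real.sqrt (t s))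

lemma sqrt_bounds {s : ℝ} (hs : 4 ≤ s) :
    s ≤ Real.sqrt (s^2 + 4) ∧ Real.sqrt (s^2 + 4) ≤ s + 4 / s := by
  have h0 : 0 < s := by linarith
  refine ⟨Real.le_sqrt_of_sq_le (by linarith), Real.sqrt_le_iff.mpr ⟨by positivity, ?_⟩⟩
  have h : (s + 4 / s)^2 = s^2 + 8 + (4 / s)^2 := by field_simp; ring
  rw [h]
  nlinarith [sq_nonneg (4 / s)]

lemma T_eq {s : ℝ} (hs : 4 ≤ s) :
    T s = s + 3 / 2 + 1 / s + Real.sqrt (s^2 + 4) / (2 * s) := by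
  have h0 : s ≠ 0 := by linarith
  unfold T
  field_simp
  ring

lemma T_bounds {s : ℝ} (hs : 4 ≤ s) : s + 2 ≤ T s ∧ T s ≤ s + 4 := by
  obtain ⟨h1, h2⟩ := sqrt_bounds hs
  have h0 : 0 < s := by linarith
  have h3 : 4 / s ≤ 1 := by rw [div_le_one h0]; exact hs
  unfold T
  constructor
  · rw [le_div_iff₀ (by positivity)]; nlinarith
  · rw [div_le_iff₀ (by positivity)]; nlinarith

lemma t_quadratic {s : ℝ} (hs : 4 ≤ s) : t s ^ 2 + 1 = T s * t s := by
  have h := T_bounds hs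
  have h1 : 0 ≤ T s ^ 2 - 4 := by nlinarith
  have h2 := Real.sq_sqrt h1
  unfold t
  nlinarith

lemma t_bounds {s : ℝ} (hs : 4 ≤ s) : s ≤ t s ∧ t s ≤ s + 4 := by
  have h := T_bounds hs
  constructor
  · have h1 : s - 2 ≤ Real.sqrt (T s ^ 2 - 4) := Real.le_sqrt_of_sq_le (by nlinarith)
    unfold t
    linarith
  · have h1 : Real.sqrt (T s ^ 2 - 4) ≤ T s := Real.sqrt_le_iff.mpr ⟨by linarith, by linarith⟩
    unfold t
    linarith

lemma tendsto_t_div : Tendsto (fun s => t s / s) atTop (𝓝 1) := by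
  have h : Tendsto (fun s : ℝ => 1 + 4 * s⁻¹) atTop (𝓝 1) := by
    simpa using (tendsto_inv_atTop_zero (𝕜 := ℝ)).const_mul 4 |>.const_add 1
  refine tendsto_of_tendsto_of_tendsto_of_le_of_le' tendsto_const_nhds h ?_ ?_
  · filter_upwards [eventually_ge_atTop 4] with s hs
    rw [le_div_iff₀ (by linarith)]
    linarith [(t_bounds hs).1]
  · filter_upwards [eventually_ge_atTop 4] with s hs
    have h0 : 0 < s := by linarith
    rw [div_le_iff₀ h0]
    have : (1 + 4 * s⁻¹) * s = s + 4 := by field_simp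
    linarith [(t_bounds hs).2]

/-- The rescaled error in the approximation `t ≈ s + 2`. -/
noncomputable def err (s : ℝ) : ℝ := s * (t s - s - 2)

lemma tendsto_err : Tendsto err atTop (𝓝 0) := by
  have h1 : Tendsto (fun s => Real.sqrt (s^2 + 4) - s) atTop (𝓝 0) := by
    have h : Tendsto (fun s : ℝ => 4 * s⁻¹) atTop (𝓝 0) := by
      simpa using (tendsto_inv_atTop_zero (𝕜 := ℝ)).const_mul 4
    refine tendsto_of_tendsto_of_tendsto_of_le_of_le' tendsto_const_nhds h ?_ ?_
    · filter_upwards [eventually_ge_atTop 4] with s hs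
      linarith [(sqrt_bounds hs).1]
    · filter_upwards [eventually_ge_atTop 4] with s hs
      have := (sqrt_bounds hs).2
      rw [div_eq_mul_inv] at this
      linarith
  have h2 : Tendsto (fun s => 1 - (t s / s)⁻¹ + (Real.sqrt (s^2 + 4) - s) / 2) atTop (𝓝 0) := by
    simpa using ((tendsto_t_div.inv₀ one_ne_zero).const_sub 1).add (h1.div_const 2)
  refine h2.congr' ?_
  filter_upwards [eventually_ge_atTop 4] with s hs
  have h0 : s ≠ 0 := by linarith
  have ht : t s ≠ 0 := by linarith [(t_bounds hs).1]
  have h3 : t s = T s - 1 / t s := by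
    have := t_quadratic hs
    field_simp
    linarith
  have h4 : err s = s * T s - s / t s - s * s - 2 * s := by
    unfold err
    conv_lhs => rw [h3]
    ring
  rw [h4, T_eq hs]
  field_simp
  ring

lemma tendsto_sq_mul_B : Tendsto (fun s => s^2 * B s) atTop (𝓝 1) := by
  -- the rational function of `(u, e) = (1 / s, err s)` equal to `s² B(s)`
  let F : ℝ × ℝ → ℝ := fun p =>
    ((1 + (1 + 2*p.1 + p.2*p.1^2) * p.2)
        * (p.1 + (1 + 2*p.1 + p.2*p.1^2) * (1 + p.2*p.1^2 + p.2*p.1))^2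
      + (1 + p.2*p.1)^2 * (1 + 2*p.1 + p.2*p.1^2)^3
        * (-2*p.1 - p.2*p.1^2 + (1 + 2*p.1 + p.2*p.1^2) * p.2)^2)
    / ((1 + p.1 + p.2*p.1^2)^2 * (1 + 2*p.1 + p.2*p.1^2)^5)
  have hF : ContinuousAt F (0, 0) := by
    refine ContinuousAt.div (by fun_prop) (by fun_prop) (by simp)
  have hF0 : F (0, 0) = 1 := by simp [F]
  have hlim : Tendsto (fun s => F (s⁻¹, err s)) atTop (𝓝 1) := by
    have h := hF.tendsto.comp (tendsto_inv_atTop_zero.prodMk_nhds tendsto_err)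
    rwa [hF0] at h
  refine hlim.congr' ?_
  filter_upwards [eventually_ge_atTop 4] with s hs
  have h0 : s ≠ 0 := by linarith
  have htb := (t_bounds hs).1
  have ht : t s ≠ 0 := by linarith
  have ht1 : t s - 1 ≠ 0 := by linarith
  have e1 : 1 + 2*s⁻¹ + err s * s⁻¹^2 = t s / s := by unfold err; field_simp; ring
  have e2 : 1 + s⁻¹ + err s * s⁻¹^2 = (t s - 1) / s := by unfold err; field_simp; ring
  simp only [F]
  rw [e1, e2]
  unfold B err
  field_simp
  ring

theorem stmt_18 : Filter.Tendsto g Filter.atTop (nhds 4) := by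
  have hlogB : Tendsto (fun s => Real.log (s^2 * B s)) atTop (𝓝 0) := by
    simpa using tendsto_sq_mul_B.log one_ne_zero
  have hlogt : Tendsto (fun s => Real.log (t s / s)) atTop (𝓝 0) := by
    simpa using tendsto_t_div.log one_ne_zero
  have hB := hlogB.div_atTop Real.tendsto_log_atTop
  have ht := hlogt.div_atTop Real.tendsto_log_atTop
  have hlim : Tendsto (fun s => (4 - 2 * (Real.log (s^2 * B s) / Real.log s))
      / (1 + Real.log (t s / s) / Real.log s)) atTop (𝓝 4) := by
    simpa [Pi.div_def] using ((hB.const_mul 2).const_sub 4).div (ht.const_add 1) (by norm_num)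
  refine hlim.congr' ?_
  filter_upwards [eventually_ge_atTop 4, tendsto_sq_mul_B.eventually_ne one_ne_zero] with s hs hB0
  have h0 : s ≠ 0 := by linarith
  have htb := (t_bounds hs).1
  have ht0 : t s ≠ 0 := by linarith
  have hls : Real.log s ≠ 0 := (Real.log_pos (by linarith)).ne'
  have hlt : Real.log (t s) ≠ 0 := (Real.log_pos (by linarith)).ne'
  unfold g
  rw [Real.log_sqrt (by linarith), Real.log_mul (by positivity) (right_ne_zero_of_mul hB0),
    Real.log_div ht0 h0, Real.log_pow]
  have h5 : 1 + (Real.log (t s) - Real.log s) / Real.log s = Real.log (t s) / Real.log s := by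
    field_simp; ring
  rw [h5]
  field_simp
  push_cast
  ring
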